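/- arXiv:1407.4318 — 2 statements merged into one kernel-verified Lean document; each statement's English description precedes it below -/
import Mathlib

section
/- Let 𝒳, 𝒴, 𝒵 be finite nonempty sets, let P be a joint probability mass function on 𝒳×𝒴×𝒵 such that X–Y–Z is a Markov chain, and let Q(·|z) be a probability mass function on 𝒳 for each z ∈ 𝒵 with Q(x|z) > 0 for all x, z. Then ED(P_{X|Y}‖Q_{X|Z}) = H(X|Z) − H(X|Y) holds if and only if Q(x|z) = P(x|z) for every x ∈ 𝒳 and every z ∈ 𝒵 with P(z) > 0. -/
/-!
The difference of the two sides is a Kullback–Leibler divergence. Under the Markov condition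
`P(y,z) P(x|y) = P(x,y,z)`, so `ED(P_{X|Y}‖Q_{X|Z})` equals `-H(X|Y) - ∑ P(x,z) log Q(x|z)`
(`EDY_eq`). Subtracting `H(X|Z) - H(X|Y)` leaves `∑ P(x,z) log (P(x|z) / Q(x|z))`, which, since
`∑ P(x,z) = ∑ P(z) Q(x|z)`, is the sum of the terms
`P(x,z) log (P(x|z) / Q(x|z)) - P(x,z) + P(z) Q(x|z)` (`EDY_sub_eq`). Each of them is nonnegative and
vanishes exactly when `P(x,z) = P(z) Q(x|z)` (`gibbsTerm_nonneg`, `gibbsTerm_eq_zero_iff`).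
-/


open Finset Real

noncomputable section

/-- Marginal `P(y)` of a joint pmf on `𝒳 × 𝒴 × 𝒵`. -/
def margY {𝒳 𝒴 𝒵 : Type*} [Fintype 𝒳] [Fintype 𝒵] (P : 𝒳 → 𝒴 → 𝒵 → ℝ) (y : 𝒴) : ℝ :=
  ∑ x, ∑ z, P x y z

/-- Marginal `P(z)`. -/
def margZ {𝒳 𝒴 𝒵 : Type*} [Fintype 𝒳] [Fintype 𝒴] (P : 𝒳 → 𝒴 → 𝒵 → ℝ) (z : 𝒵) : ℝ :=
  ∑ x, ∑ y, P x y z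

/-- Marginal `P(x,y)`. -/
def margXY {𝒳 𝒴 𝒵 : Type*} [Fintype 𝒵] (P : 𝒳 → 𝒴 → 𝒵 → ℝ) (x : 𝒳) (y : 𝒴) : ℝ :=
  ∑ z, P x y z

/-- Marginal `P(x,z)`. -/
def margXZ {𝒳 𝒴 𝒵 : Type*} [Fintype 𝒴] (P : 𝒳 → 𝒴 → 𝒵 → ℝ) (x : 𝒳) (z : 𝒵) : ℝ :=
  ∑ y, P x y z

/-- Marginal `P(y,z)`. -/
def margYZ {𝒳 𝒴 𝒵 : Type*} [Fintype 𝒳] (P : 𝒳 → 𝒴 → 𝒵 → ℝ) (y : 𝒴) (z : 𝒵) : ℝ :=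
  ∑ x, P x y z

/-- Conditional `P(x|y) = P(x,y)/P(y)`. -/
def condXY {𝒳 𝒴 𝒵 : Type*} [Fintype 𝒳] [Fintype 𝒵] (P : 𝒳 → 𝒴 → 𝒵 → ℝ) (x : 𝒳) (y : 𝒴) : ℝ :=
  margXY P x y / margY P y

/-- Conditional `P(x|z) = P(x,z)/P(z)`. -/
def condXZ {𝒳 𝒴 𝒵 : Type*} [Fintype 𝒳] [Fintype 𝒴] (P : 𝒳 → 𝒴 → 𝒵 → ℝ) (x : 𝒳) (z : 𝒵) : ℝ :=
  margXZ P x z / margZ P z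

/-- Conditional entropy `H(X|Y)`. -/
def condEntXY {𝒳 𝒴 𝒵 : Type*} [Fintype 𝒳] [Fintype 𝒴] [Fintype 𝒵] (P : 𝒳 → 𝒴 → 𝒵 → ℝ) : ℝ :=
  -∑ x, ∑ y, if 0 < margXY P x y then margXY P x y * Real.log (margXY P x y / margY P y) else 0

/-- Conditional entropy `H(X|Z)`. -/
def condEntXZ {𝒳 𝒴 𝒵 : Type*} [Fintype 𝒳] [Fintype 𝒴] [Fintype 𝒵] (P : 𝒳 → 𝒴 → 𝒵 → ℝ) : ℝ :=
  -∑ x, ∑ z, if 0 < margXZ P x z then margXZ P x z * Real.log (margXZ P x z / margZ P z) else 0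

/-- Expected divergence `ED(P_{X|Y} ‖ Q_{X|Z})`. -/
def EDY {𝒳 𝒴 𝒵 : Type*} [Fintype 𝒳] [Fintype 𝒴] [Fintype 𝒵]
    (P : 𝒳 → 𝒴 → 𝒵 → ℝ) (Q : 𝒵 → 𝒳 → ℝ) : ℝ :=
  ∑ y, ∑ z, if 0 < margYZ P y z then
      margYZ P y z *
        ∑ x, (if 0 < condXY P x y then condXY P x y * Real.log (condXY P x y / Q z x) else 0)
    else 0

/-- Expected divergence `ED(P_{X|Z} ‖ Q_{X|Z})`. -/
def EDZ {𝒳 𝒴 𝒵 : Type*} [Fintype 𝒳] [Fintype 𝒴] [Fintype 𝒵]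
    (P : 𝒳 → 𝒴 → 𝒵 → ℝ) (Q : 𝒵 → 𝒳 → ℝ) : ℝ :=
  ∑ z, if 0 < margZ P z then
      margZ P z *
        ∑ x, (if 0 < condXZ P x z then condXZ P x z * Real.log (condXZ P x z / Q z x) else 0)
    else 0

/-- `P` is a joint probability mass function. -/
def IsJointPMF {𝒳 𝒴 𝒵 : Type*} [Fintype 𝒳] [Fintype 𝒴] [Fintype 𝒵] (P : 𝒳 → 𝒴 → 𝒵 → ℝ) : Prop :=
  (∀ x y z, 0 ≤ P x y z) ∧ ∑ x, ∑ y, ∑ z, P x y z = 1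

/-- The Markov chain condition `X – Y – Z`: `P(x,y,z) P(y) = P(x,y) P(y,z)`. -/
def IsMarkov {𝒳 𝒴 𝒵 : Type*} [Fintype 𝒳] [Fintype 𝒴] [Fintype 𝒵] (P : 𝒳 → 𝒴 → 𝒵 → ℝ) : Prop :=
  ∀ x y z, P x y z * margY P y = margXY P x y * margYZ P y z

end

/-- The pointwise divergence `a log ((a/m)/q) - a + m q` between the masses `a` and `m q`. -/
noncomputable def gibbsTerm (a m q : ℝ) : ℝ :=
  a * (Real.log (a / m) - Real.log q) - a + m * q

lemma gibbsTerm_eq_klFun {a m q : ℝ} (ha : 0 ≤ a) (hm : 0 < m) (hq : 0 < q) :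
    gibbsTerm a m q = m * q * InformationTheory.klFun (a / (m * q)) := by
  unfold gibbsTerm InformationTheory.klFun
  rcases ha.eq_or_lt with rfl | ha
  · simp
  · rw [← div_div, Real.log_div (div_pos ha hm).ne' hq.ne']
    field_simp
    ring

lemma gibbsTerm_nonneg {a m q : ℝ} (ha : 0 ≤ a) (hm : 0 ≤ m) (hq : 0 < q) (ham : m = 0 → a = 0) :
    0 ≤ gibbsTerm a m q := by
  rcases hm.eq_or_lt with rfl | hm
  · simp [gibbsTerm, ham rfl]
  · rw [gibbsTerm_eq_klFun ha hm hq]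
    exact mul_nonneg (by positivity) (InformationTheory.klFun_nonneg (by positivity))

lemma gibbsTerm_eq_zero_iff {a m q : ℝ} (ha : 0 ≤ a) (hm : 0 < m) (hq : 0 < q) :
    gibbsTerm a m q = 0 ↔ q = a / m := by
  have hmq : 0 < m * q := by positivity
  rw [gibbsTerm_eq_klFun ha hm hq, mul_eq_zero, or_iff_right hmq.ne',
    InformationTheory.klFun_eq_zero_iff (by positivity), div_eq_one_iff_eq hmq.ne',
    eq_div_iff hm.ne', mul_comm q m, eq_comm]

section
variable {𝒳 𝒴 𝒵 : Type*} [Fintype 𝒳] [Fintype 𝒴] [Fintype 𝒵] {P : 𝒳 → 𝒴 → 𝒵 → ℝ}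

lemma condEntXY_eq (h0 : ∀ x y z, 0 ≤ P x y z) :
    condEntXY P = -∑ x, ∑ y, margXY P x y * Real.log (condXY P x y) := by
  unfold condEntXY condXY
  refine congrArg _ (sum_congr rfl fun x _ => sum_congr rfl fun y _ => ?_)
  have h : 0 ≤ margXY P x y := sum_nonneg fun z _ => h0 x y z
  split_ifs with hp
  · rfl
  · simp [le_antisymm (not_lt.mp hp) h]

lemma condEntXZ_eq (h0 : ∀ x y z, 0 ≤ P x y z) :
    condEntXZ P = -∑ x, ∑ z, margXZ P x z * Real.log (margXZ P x z / margZ P z) := by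
  unfold condEntXZ
  refine congrArg _ (sum_congr rfl fun x _ => sum_congr rfl fun z _ => ?_)
  have h : 0 ≤ margXZ P x z := sum_nonneg fun y _ => h0 x y z
  split_ifs with hp
  · rfl
  · simp [le_antisymm (not_lt.mp hp) h]

/-- Expected divergence as an expectation under the joint law; this is where the Markov
condition enters. -/
lemma EDY_eq_sum (h0 : ∀ x y z, 0 ≤ P x y z) (hM : IsMarkov P)
    {Q : 𝒵 → 𝒳 → ℝ} (hQ : ∀ z x, 0 < Q z x) :
    EDY P Q = ∑ y, ∑ z, ∑ x, P x y z * (Real.log (condXY P x y) - Real.log (Q z x)) := by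
  unfold EDY
  refine sum_congr rfl fun y _ => sum_congr rfl fun z _ => ?_
  split_ifs with hyz
  · have hY : 0 < margY P y := hyz.trans_le
      (sum_le_sum fun x _ => single_le_sum (fun z _ => h0 x y z) (mem_univ z))
    rw [mul_sum]
    refine sum_congr rfl fun x _ => ?_
    have hPx : P x y z = margYZ P y z * condXY P x y := by
      unfold condXY
      rw [mul_div_assoc', eq_div_iff hY.ne', hM x y z, mul_comm]
    have hc : 0 ≤ condXY P x y := div_nonneg (sum_nonneg fun z _ => h0 x y z) hY.le
    rw [hPx]
    split_ifs with hp
    · rw [Real.log_div hp.ne' (hQ z x).ne', mul_assoc]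
    · simp [le_antisymm (not_lt.mp hp) hc]
  · have hz : ∀ x, P x y z = 0 := fun x => le_antisymm
      ((single_le_sum (f := fun x => P x y z) (fun x _ => h0 x y z) (mem_univ x)).trans
        (not_lt.mp hyz)) (h0 x y z)
    simp [hz]

lemma EDY_eq (h0 : ∀ x y z, 0 ≤ P x y z) (hM : IsMarkov P)
    {Q : 𝒵 → 𝒳 → ℝ} (hQ : ∀ z x, 0 < Q z x) :
    EDY P Q = -condEntXY P - ∑ x, ∑ z, margXZ P x z * Real.log (Q z x) := by
  have h1 : ∑ y, ∑ z, ∑ x, P x y z * Real.log (condXY P x y) = -condEntXY P := by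
    rw [condEntXY_eq h0, neg_neg, sum_comm (s := (univ : Finset 𝒳))]
    refine sum_congr rfl fun y _ => ?_
    rw [sum_comm]
    exact sum_congr rfl fun x _ => (sum_mul ..).symm
  have h2 : ∑ y, ∑ z, ∑ x, P x y z * Real.log (Q z x)
      = ∑ x, ∑ z, margXZ P x z * Real.log (Q z x) := by
    rw [sum_comm, sum_comm (s := (univ : Finset 𝒳))]
    refine sum_congr rfl fun z _ => ?_
    rw [sum_comm]
    exact sum_congr rfl fun x _ => (sum_mul ..).symm
  rw [EDY_eq_sum h0 hM hQ, ← h1, ← h2]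
  simp only [mul_sub, sum_sub_distrib]

lemma EDY_sub_eq (h0 : ∀ x y z, 0 ≤ P x y z) (hM : IsMarkov P)
    {Q : 𝒵 → 𝒳 → ℝ} (hQ : ∀ z x, 0 < Q z x) (hQsum : ∀ z, ∑ x, Q z x = 1) :
    EDY P Q - (condEntXZ P - condEntXY P)
      = ∑ x, ∑ z, gibbsTerm (margXZ P x z) (margZ P z) (Q z x) := by
  have hmass : ∑ x, ∑ z, margZ P z * Q z x = ∑ x, ∑ z, margXZ P x z := by
    rw [sum_comm, sum_comm (s := (univ : Finset 𝒳))]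
    refine sum_congr rfl fun z _ => ?_
    rw [← mul_sum, hQsum, mul_one]
    rfl
  rw [EDY_eq h0 hM hQ, condEntXZ_eq h0]
  simp only [gibbsTerm, mul_sub, sum_sub_distrib, sum_add_distrib, hmass]
  ring

end

/-- **Role model theorem (equality condition).** If `X – Y – Z` is a Markov chain, then
`ED(P_{X|Y}‖Q_{X|Z}) = H(X|Z) − H(X|Y)` iff `Q(x|z) = P(x|z)` whenever `P(z) > 0`. -/
theorem role_model_equality_iff {𝒳 𝒴 𝒵 : Type*} [Fintype 𝒳] [Fintype 𝒴] [Fintype 𝒵]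
    [Nonempty 𝒳] [Nonempty 𝒴] [Nonempty 𝒵]
    (P : 𝒳 → 𝒴 → 𝒵 → ℝ) (hP : IsJointPMF P) (hMarkov : IsMarkov P)
    (Q : 𝒵 → 𝒳 → ℝ) (hQpos : ∀ z x, 0 < Q z x) (hQsum : ∀ z, ∑ x, Q z x = 1) :
    EDY P Q = condEntXZ P - condEntXY P ↔
      ∀ x : 𝒳, ∀ z : 𝒵, 0 < margZ P z → Q z x = condXZ P x z := by
  have h0 := hP.1
  have hXZ : ∀ x z, 0 ≤ margXZ P x z := fun x z => sum_nonneg fun y _ => h0 x y z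
  have hZ : ∀ z, 0 ≤ margZ P z := fun z => sum_nonneg fun x _ => hXZ x z
  have hle : ∀ x z, margXZ P x z ≤ margZ P z := fun x z =>
    single_le_sum (f := fun x => margXZ P x z) (fun x _ => hXZ x z) (mem_univ x)
  have hac : ∀ x z, margZ P z = 0 → margXZ P x z = 0 := fun x z h =>
    le_antisymm (h ▸ hle x z) (hXZ x z)
  have hnn : ∀ x z, 0 ≤ gibbsTerm (margXZ P x z) (margZ P z) (Q z x) := fun x z =>
    gibbsTerm_nonneg (hXZ x z) (hZ z) (hQpos z x) (hac x z)
  rw [← sub_eq_zero, EDY_sub_eq h0 hMarkov hQpos hQsum,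
    sum_eq_zero_iff_of_nonneg fun x _ => sum_nonneg fun z _ => hnn x z]
  refine forall_congr' fun x => ?_
  simp only [mem_univ, true_imp_iff]
  rw [sum_eq_zero_iff_of_nonneg fun z _ => hnn x z]
  refine forall_congr' fun z => ?_
  simp only [mem_univ, true_imp_iff]
  rcases (hZ z).eq_or_lt with hz | hz
  · simp [gibbsTerm, ← hz, hac x z hz.symm]
  · rw [gibbsTerm_eq_zero_iff (hXZ x z) hz (hQpos z x)]
    simp only [hz, true_imp_iff, condXZ]
end

section
/- Let 𝒳, 𝒴, 𝒵 be finite nonempty sets and let P be a joint probability mass function on 𝒳×𝒴×𝒵 such that X–Y–Z is a Markov chain. Suppose ED(P_{X|Y}‖Q_{X|Z}) = 0 for some family Q(·|z) of everywhere-positive probability mass functions on 𝒳. Then H(X|Z) = H(X|Y); that is, the expected divergence between the role model output and the trained estimator output can vanish only when Z is as informative about X as Y (Z is a sufficient statistic of Y for X in the sense that I(X;Z) = I(X;Y)). -/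
/-!
Expected divergence is a `P(y,z)`-weighted sum of divergences `D(P(·|y) ‖ Q(·|z))`, each nonnegative
by Gibbs' inequality, so if it vanishes then `P(·|y) = Q(·|z)` whenever `P(y,z) > 0`
(`condXY_eq_of_EDY_eq_zero`). With the Markov property this gives `P(x,y,z) = Q(x|z) P(y,z)`, and
summing over `y` yields `P(x,z) = Q(x|z) P(z)`. Hence `P(x|z) = Q(x|z) = P(x|y)` wherever
`P(x,y,z) > 0`, and both conditional entropies are the `P(x,y,z)`-average of the negative logarithm
of this common value.
-/

open Finset Real

/-- Each summand of the divergence `D(p ‖ q)`, corrected by `q - p` (which sums to zero), is a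
nonnegative multiple of `klFun`. -/
lemma divergence_term_eq (p q : ℝ) (hp : 0 ≤ p) (hq : 0 < q) :
    (if 0 < p then p * Real.log (p / q) else 0) =
      q * InformationTheory.klFun (p / q) + (p - q) := by
  have h : q * (p / q) = p := by field_simp
  rcases hp.eq_or_lt with rfl | hp
  · simp [InformationTheory.klFun]
  · rw [if_pos hp, InformationTheory.klFun]
    linear_combination (-Real.log (p / q) + 1) * h

lemma divergence_eq_sum_klFun {α : Type*} [Fintype α] (p q : α → ℝ) (hp : ∀ x, 0 ≤ p x)
    (hq : ∀ x, 0 < q x) (hps : ∑ x, p x = 1) (hqs : ∑ x, q x = 1) :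
    (∑ x, if 0 < p x then p x * Real.log (p x / q x) else 0) =
      ∑ x, q x * InformationTheory.klFun (p x / q x) := by
  rw [Finset.sum_congr rfl fun x _ => divergence_term_eq (p x) (q x) (hp x) (hq x),
    Finset.sum_add_distrib, Finset.sum_sub_distrib, hps, hqs]
  ring

lemma divergence_nonneg {α : Type*} [Fintype α] (p q : α → ℝ) (hp : ∀ x, 0 ≤ p x)
    (hq : ∀ x, 0 < q x) (hps : ∑ x, p x = 1) (hqs : ∑ x, q x = 1) :
    0 ≤ ∑ x, if 0 < p x then p x * Real.log (p x / q x) else 0 := by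
  rw [divergence_eq_sum_klFun p q hp hq hps hqs]
  exact Finset.sum_nonneg fun x _ => mul_nonneg (hq x).le
    (InformationTheory.klFun_nonneg (div_nonneg (hp x) (hq x).le))

lemma eq_of_divergence_eq_zero {α : Type*} [Fintype α] (p q : α → ℝ) (hp : ∀ x, 0 ≤ p x)
    (hq : ∀ x, 0 < q x) (hps : ∑ x, p x = 1) (hqs : ∑ x, q x = 1)
    (h : (∑ x, if 0 < p x then p x * Real.log (p x / q x) else 0) = 0) (x : α) :
    p x = q x := by
  rw [divergence_eq_sum_klFun p q hp hq hps hqs,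
    Finset.sum_eq_zero_iff_of_nonneg fun x _ => mul_nonneg (hq x).le
      (InformationTheory.klFun_nonneg (div_nonneg (hp x) (hq x).le))] at h
  have h1 := (mul_eq_zero.mp (h x (Finset.mem_univ x))).resolve_left (hq x).ne'
  rw [InformationTheory.klFun_eq_zero_iff (div_nonneg (hp x) (hq x).le),
    div_eq_one_iff_eq (hq x).ne'] at h1
  exact h1

section

variable {𝒳 𝒴 𝒵 : Type*} [Fintype 𝒳] [Fintype 𝒵]
  {P : 𝒳 → 𝒴 → 𝒵 → ℝ} {Q : 𝒵 → 𝒳 → ℝ}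

lemma margYZ_le_margY (hP : ∀ x y z, 0 ≤ P x y z) (y : 𝒴) (z : 𝒵) :
    margYZ P y z ≤ margY P y :=
  Finset.sum_le_sum fun x _ =>
    Finset.single_le_sum (f := fun z => P x y z) (fun z _ => hP x y z) (Finset.mem_univ z)

lemma condXY_nonneg (hP : ∀ x y z, 0 ≤ P x y z) (x : 𝒳) (y : 𝒴) : 0 ≤ condXY P x y :=
  div_nonneg (Finset.sum_nonneg fun z _ => hP x y z)
    (Finset.sum_nonneg fun x _ => Finset.sum_nonneg fun z _ => hP x y z)

lemma sum_condXY {y : 𝒴} (hy : 0 < margY P y) : ∑ x, condXY P x y = 1 := by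
  unfold condXY
  rw [← Finset.sum_div]
  exact div_self hy.ne'

variable [Fintype 𝒴]

lemma condXY_eq_of_EDY_eq_zero (hP : ∀ x y z, 0 ≤ P x y z) (hQpos : ∀ z x, 0 < Q z x)
    (hQsum : ∀ z, ∑ x, Q z x = 1) (hED : EDY P Q = 0) {y : 𝒴} {z : 𝒵}
    (hyz : 0 < margYZ P y z) (x : 𝒳) : condXY P x y = Q z x := by
  have hnonneg : ∀ y z, 0 ≤ if 0 < margYZ P y z then
      margYZ P y z *
        ∑ x, (if 0 < condXY P x y then condXY P x y * Real.log (condXY P x y / Q z x) else 0)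
      else 0 := by
    intro y z
    split_ifs with h
    · exact mul_nonneg h.le (divergence_nonneg (fun x => condXY P x y) (Q z)
        (fun x => condXY_nonneg hP x y) (hQpos z)
        (sum_condXY (h.trans_le (margYZ_le_margY hP y z))) (hQsum z))
    · exact le_rfl
  have h1 := (Finset.sum_eq_zero_iff_of_nonneg fun y _ =>
    Finset.sum_nonneg fun z _ => hnonneg y z).mp hED y (Finset.mem_univ y)
  have h2 := (Finset.sum_eq_zero_iff_of_nonneg fun z _ => hnonneg y z).mp h1 z (Finset.mem_univ z)
  rw [if_pos hyz] at h2
  exact eq_of_divergence_eq_zero (fun x => condXY P x y) (Q z)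
    (fun x => condXY_nonneg hP x y) (hQpos z)
    (sum_condXY (hyz.trans_le (margYZ_le_margY hP y z))) (hQsum z)
    ((mul_eq_zero.mp h2).resolve_left hyz.ne') x

/-- The joint pmf factors as `P(x,y,z) = Q(x|z) P(y,z)`. -/
lemma joint_eq_mul_margYZ (hP : ∀ x y z, 0 ≤ P x y z) (hMarkov : IsMarkov P)
    (hQpos : ∀ z x, 0 < Q z x) (hQsum : ∀ z, ∑ x, Q z x = 1) (hED : EDY P Q = 0)
    (x : 𝒳) (y : 𝒴) (z : 𝒵) : P x y z = Q z x * margYZ P y z := by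
  have hle : P x y z ≤ margYZ P y z :=
    Finset.single_le_sum (f := fun x => P x y z) (fun x _ => hP x y z) (Finset.mem_univ x)
  rcases ((hP x y z).trans hle).eq_or_lt with h | h
  · rw [← h, mul_zero]
    exact le_antisymm (h ▸ hle) (hP x y z)
  · have hy := h.trans_le (margYZ_le_margY hP y z)
    rw [← condXY_eq_of_EDY_eq_zero hP hQpos hQsum hED h x, condXY, div_mul_eq_mul_div,
      eq_div_iff hy.ne']
    exact hMarkov x y z

lemma margXZ_eq_mul_margZ (hP : ∀ x y z, 0 ≤ P x y z) (hMarkov : IsMarkov P)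
    (hQpos : ∀ z x, 0 < Q z x) (hQsum : ∀ z, ∑ x, Q z x = 1) (hED : EDY P Q = 0)
    (x : 𝒳) (z : 𝒵) : margXZ P x z = Q z x * margZ P z := by
  unfold margXZ margZ
  rw [Finset.sum_congr rfl fun y _ => joint_eq_mul_margYZ hP hMarkov hQpos hQsum hED x y z,
    ← Finset.mul_sum, Finset.sum_comm]
  rfl

end

/-- If the expected divergence between the role model output and the trained estimator
output vanishes, then `Z` is as informative about `X` as `Y`: `H(X|Z) = H(X|Y)`. -/
theorem ED_zero_implies_sufficient {𝒳 𝒴 𝒵 : Type*}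
    [Fintype 𝒳] [Fintype 𝒴] [Fintype 𝒵] [Nonempty 𝒳] [Nonempty 𝒴] [Nonempty 𝒵]
    (P : 𝒳 → 𝒴 → 𝒵 → ℝ) (hP : IsJointPMF P) (hMarkov : IsMarkov P)
    (Q : 𝒵 → 𝒳 → ℝ) (hQpos : ∀ z x, 0 < Q z x) (hQsum : ∀ z, ∑ x, Q z x = 1)
    (hED : EDY P Q = 0) :
    condEntXZ P = condEntXY P := by
  have hP0 := hP.1
  -- Both entropies are rewritten as averages of `log Q(x|z)` over `P(x,y,z)`.
  have hXZ : ∀ x z, (if 0 < margXZ P x z then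
      margXZ P x z * Real.log (margXZ P x z / margZ P z) else 0) =
      ∑ y, P x y z * Real.log (Q z x) := by
    intro x z
    rw [← Finset.sum_mul]
    change _ = margXZ P x z * _
    split_ifs with h
    · have hf := margXZ_eq_mul_margZ hP0 hMarkov hQpos hQsum hED x z
      have hz : margZ P z ≠ 0 := fun h0 => by simp [hf, h0] at h
      rw [(div_eq_iff hz).mpr hf]
    · have h0 : margXZ P x z = 0 :=
        le_antisymm (not_lt.mp h) (Finset.sum_nonneg fun y _ => hP0 x y z)
      rw [h0, zero_mul]
  have hXY : ∀ x y, (if 0 < margXY P x y then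
      margXY P x y * Real.log (margXY P x y / margY P y) else 0) =
      ∑ z, P x y z * Real.log (Q z x) := by
    intro x y
    have hcond : ∀ z, P x y z * Real.log (margXY P x y / margY P y) =
        P x y z * Real.log (Q z x) := by
      intro z
      rcases (hP0 x y z).eq_or_lt with h | h
      · rw [← h, zero_mul, zero_mul]
      · have hyz : 0 < margYZ P y z := h.trans_le
          (Finset.single_le_sum (f := fun x => P x y z) (fun x _ => hP0 x y z)
            (Finset.mem_univ x))
        rw [← condXY_eq_of_EDY_eq_zero hP0 hQpos hQsum hED hyz x, condXY]
    rw [← Finset.sum_congr rfl fun z _ => hcond z, ← Finset.sum_mul]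
    change _ = margXY P x y * _
    split_ifs with h
    · rfl
    · have h0 : margXY P x y = 0 :=
        le_antisymm (not_lt.mp h) (Finset.sum_nonneg fun z _ => hP0 x y z)
      rw [h0, zero_mul]
  unfold condEntXZ condEntXY
  simp only [hXZ, hXY]
  exact congrArg Neg.neg (Finset.sum_congr rfl fun x _ => Finset.sum_comm)
end
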